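/- For a locally compact metric space X, an abelian group A, and an integer n, the following are equivalent: (1) dim_A X ≤ n; (2) H^{n+1}_c(U;A) = 0 for every precompact open subset U of X; (3) for every pair B ⊆ C of compact subsets of X, the restriction homomorphism H^n(C;A) → H^n(B;A) is surjective. -/

import Mathlib

open Set Function

open scoped ENNReal

noncomputable section

/-! ### Alexander–Spanier (Čech) cohomology -/

namespace AS

variable (A : Type*) [AddCommGroup A]

/-- Alexander–Spanier `n`-cochains on `X` with coefficients in `A`. -/
abbrev Cochain (X : Type*) (n : ℕ) : Type _ := (Fin (n + 1) → X) → A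

/-- The Alexander–Spanier coboundary operator. -/
def d (X : Type*) (n : ℕ) : Cochain A X n →+ Cochain A X (n + 1) :=
  AddMonoidHom.mk' (fun φ s => ∑ i : Fin (n + 2), ((-1 : ℤ) ^ (i : ℕ)) • φ (s ∘ i.succAbove))
    (fun φ ψ => funext fun s => by
      simp [smul_add, Finset.sum_add_distrib])

/-- An open cover of `X`. -/
def IsOpenCover {X : Type*} [TopologicalSpace X] (U : Set (Set X)) : Prop :=
  (∀ u ∈ U, IsOpen u) ∧ ⋃₀ U = univ

/-- A tuple is `U`-small if it is contained in a single member of `U`. -/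
def Small {X : Type*} (U : Set (Set X)) {k : ℕ} (s : Fin k → X) : Prop :=
  ∃ u ∈ U, ∀ i, s i ∈ u

/-- The subgroup of cochains vanishing on all tuples that are small with respect to
some open cover (i.e. vanishing in a neighbourhood of the diagonal). -/
def locZero (X : Type*) [TopologicalSpace X] (n : ℕ) : AddSubgroup (Cochain A X n) where
  carrier := {φ | ∃ U, IsOpenCover U ∧ ∀ s : Fin (n + 1) → X, Small U s → φ s = 0}
  zero_mem' := ⟨{univ}, ⟨fun u hu => by rw [mem_singleton_iff] at hu; rw [hu]; exact isOpen_univ,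
      by simp⟩, fun s _ => rfl⟩
  add_mem' := by
    rintro φ ψ ⟨U, ⟨hUo, hUc⟩, hφ⟩ ⟨W, ⟨hWo, hWc⟩, hψ⟩
    refine ⟨(fun p : Set X × Set X => p.1 ∩ p.2) '' (U ×ˢ W), ⟨?_, ?_⟩, ?_⟩
    · rintro _ ⟨⟨u, w⟩, ⟨hu, hw⟩, rfl⟩
      exact (hUo u hu).inter (hWo w hw)
    · apply eq_univ_of_forall
      intro x
      have hx1 : x ∈ ⋃₀ U := hUc ▸ mem_univ x
      have hx2 : x ∈ ⋃₀ W := hWc ▸ mem_univ x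
      obtain ⟨u, hu, hxu⟩ := hx1
      obtain ⟨w, hw, hxw⟩ := hx2
      exact ⟨u ∩ w, ⟨⟨u, w⟩, ⟨hu, hw⟩, rfl⟩, hxu, hxw⟩
    · rintro s ⟨_, ⟨⟨u, w⟩, ⟨hu, hw⟩, rfl⟩, hs⟩
      have h1 : φ s = 0 := hφ s ⟨u, hu, fun i => (hs i).1⟩
      have h2 : ψ s = 0 := hψ s ⟨w, hw, fun i => (hs i).2⟩
      show φ s + ψ s = 0
      rw [h1, h2, add_zero]
  neg_mem' := by
    rintro φ ⟨U, hU, hφ⟩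
    exact ⟨U, hU, fun s hs => by show -φ s = 0; rw [hφ s hs, neg_zero]⟩

/-- The Alexander–Spanier cochain complex: cochains modulo locally zero cochains. -/
abbrev QC (X : Type*) [TopologicalSpace X] (n : ℕ) : Type _ := Cochain A X n ⧸ locZero A X n

lemma d_locZero (X : Type*) [TopologicalSpace X] (n : ℕ) :
    locZero A X n ≤ (locZero A X (n + 1)).comap (d A X n) := by
  rintro φ ⟨U, hU, hφ⟩
  refine ⟨U, hU, fun s ⟨u, hu, hs⟩ => ?_⟩
  show (d A X n φ) s = 0
  have : ∀ i : Fin (n + 2), φ (s ∘ i.succAbove) = 0 :=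
    fun i => hφ _ ⟨u, hu, fun j => hs _⟩
  simp only [d, AddMonoidHom.mk'_apply]
  exact Finset.sum_eq_zero fun i _ => by rw [this i, smul_zero]

/-- The induced differential on the Alexander–Spanier complex. -/
def dQ (X : Type*) [TopologicalSpace X] (n : ℕ) : QC A X n →+ QC A X (n + 1) :=
  QuotientAddGroup.map _ _ (d A X n) (d_locZero A X n)

/-- Cocycles. -/
def cocycles (X : Type*) [TopologicalSpace X] (n : ℕ) : AddSubgroup (QC A X n) :=
  (dQ A X n).ker

/-- Coboundaries (the trivial subgroup in degree `0`). -/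
def cobounds (X : Type*) [TopologicalSpace X] (n : ℕ) : AddSubgroup (QC A X n) :=
  match n with
  | 0 => ⊥
  | (m + 1) => (dQ A X m).range

/-- Alexander–Spanier cohomology of `X` with coefficients in `A`; for paracompact Hausdorff
(e.g. metric) spaces this is naturally isomorphic to Čech cohomology. -/
def ASH (n : ℕ) (X : Type*) [TopologicalSpace X] : Type _ :=
  ↥(cocycles A X n) ⧸ ((cobounds A X n).comap (cocycles A X n).subtype)

instance (n : ℕ) (X : Type*) [TopologicalSpace X] : AddCommGroup (ASH A n X) :=
  inferInstanceAs (AddCommGroup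
    (↥(cocycles A X n) ⧸ ((cobounds A X n).comap (cocycles A X n).subtype)))

end AS

namespace AS

variable (A : Type*) [AddCommGroup A]

/-- Pullback of Alexander–Spanier cochains along a map. -/
def pull {X Y : Type*} (f : X → Y) (n : ℕ) : Cochain A Y n →+ Cochain A X n :=
  AddMonoidHom.mk' (fun φ s => φ (f ∘ s)) (fun φ ψ => rfl)

lemma pull_d {X Y : Type*} (f : X → Y) (n : ℕ) (φ : Cochain A Y n) :
    pull A f (n + 1) (d A Y n φ) = d A X n (pull A f n φ) := rfl

lemma pull_locZero {X Y : Type*} [TopologicalSpace X] [TopologicalSpace Y] {f : X → Y}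
    (hf : Continuous f) (n : ℕ) :
    locZero A Y n ≤ (locZero A X n).comap (pull A f n) := by
  rintro φ ⟨U, ⟨hUo, hUc⟩, hφ⟩
  refine ⟨(f ⁻¹' ·) '' U, ⟨?_, ?_⟩, ?_⟩
  · rintro _ ⟨u, hu, rfl⟩
    exact (hUo u hu).preimage hf
  · apply eq_univ_of_forall
    intro x
    have : f x ∈ ⋃₀ U := hUc ▸ mem_univ _
    obtain ⟨u, hu, hx⟩ := this
    exact ⟨f ⁻¹' u, ⟨u, hu, rfl⟩, hx⟩
  · rintro s ⟨_, ⟨u, hu, rfl⟩, hs⟩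
    exact hφ _ ⟨u, hu, fun i => hs i⟩

/-- Pullback on the Alexander–Spanier complex. -/
def pullQ {X Y : Type*} [TopologicalSpace X] [TopologicalSpace Y] {f : X → Y}
    (hf : Continuous f) (n : ℕ) : QC A Y n →+ QC A X n :=
  QuotientAddGroup.map _ _ (pull A f n) (pull_locZero A hf n)

lemma pullQ_d {X Y : Type*} [TopologicalSpace X] [TopologicalSpace Y] {f : X → Y}
    (hf : Continuous f) (n : ℕ) (x : QC A Y n) :
    pullQ A hf (n + 1) (dQ A Y n x) = dQ A X n (pullQ A hf n x) := by
  refine QuotientAddGroup.induction_on x ?_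
  intro φ
  simp only [pullQ, dQ, QuotientAddGroup.map_mk, pull_d]

lemma pullQ_cocycles {X Y : Type*} [TopologicalSpace X] [TopologicalSpace Y] {f : X → Y}
    (hf : Continuous f) (n : ℕ) {x : QC A Y n} (hx : x ∈ cocycles A Y n) :
    pullQ A hf n x ∈ cocycles A X n := by
  have : dQ A Y n x = 0 := hx
  show dQ A X n (pullQ A hf n x) = 0
  rw [← pullQ_d, this, map_zero]

lemma pullQ_cobounds {X Y : Type*} [TopologicalSpace X] [TopologicalSpace Y] {f : X → Y}
    (hf : Continuous f) (n : ℕ) {x : QC A Y n} (hx : x ∈ cobounds A Y n) :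
    pullQ A hf n x ∈ cobounds A X n := by
  match n with
  | 0 =>
    have : x = 0 := hx
    rw [this, map_zero]
    exact (⊥ : AddSubgroup (QC A X 0)).zero_mem
  | (m + 1) =>
    obtain ⟨y, rfl⟩ := hx
    exact ⟨pullQ A hf m y, (pullQ_d A hf m y).symm⟩

/-- The map on cocycles induced by a continuous map. -/
def pullZ {X Y : Type*} [TopologicalSpace X] [TopologicalSpace Y] {f : X → Y}
    (hf : Continuous f) (n : ℕ) : ↥(cocycles A Y n) →+ ↥(cocycles A X n) :=
  AddMonoidHom.codRestrict ((pullQ A hf n).comp (cocycles A Y n).subtype) _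
    (fun x => pullQ_cocycles A hf n x.2)

/-- The homomorphism induced on Alexander–Spanier (Čech) cohomology by a continuous map.
Note the contravariance: a map `f : X → Y` induces `ASHmap : ASH A n Y →+ ASH A n X`. -/
def ASHmap {X Y : Type*} [TopologicalSpace X] [TopologicalSpace Y] {f : X → Y}
    (hf : Continuous f) (n : ℕ) : ASH A n Y →+ ASH A n X :=
  QuotientAddGroup.map _ _ (pullZ A hf n) (by
    rintro ⟨x, hx⟩ hmem
    have : x ∈ cobounds A Y n := hmem
    exact pullQ_cobounds A hf n this)

end AS

namespace AS

variable (A : Type*) [AddCommGroup A]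

/-- Čech cohomology with compact supports: for compact `B` this is the (Alexander–Spanier =
Čech) cohomology of `B` itself, and for noncompact `B` it is that of the one-point
compactification of `B`. -/
def Hc (n : ℕ) (B : Type*) [TopologicalSpace B] : Type _ :=
  open scoped Classical in
  if CompactSpace B then ASH A n B else ASH A n (OnePoint B)

end AS

/-- The cohomological dimension `dim_A X` of a space `X` with respect to an abelian group `A`:
the supremum of the integers `n` for which there is a locally compact subset `B ⊆ X` with
`H^n_c(B; A) ≠ 0`. -/
noncomputable def cohDim (A : Type*) [AddCommGroup A] (X : Type*) [TopologicalSpace X] : ℕ∞ :=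
  sSup {e : ℕ∞ | ∃ n : ℕ, e = (n : ℕ∞) ∧
    ∃ B : Set X, LocallyCompactSpace B ∧ Nontrivial (AS.Hc A n B)}

/-!
A cocycle which vanishes on all tuples of points close to a given point is the coboundary of its
cone over that point, so cocycles always have primitives locally. To glue two primitives one has to
extend cocycles from an intersection of compact sets, which is what surjectivity of restriction
provides, and then to push the cocycle into a smaller set; since Alexander–Spanier cochains need not
be continuous, this can be done by a discontinuous retraction close to the identity, whose prism
operator is a cochain homotopy. Thus if `n`-cocycles extend, then `(n + 1)`-cocycles on compact sets
are coboundaries. This gives extension in all higher degrees and the vanishing of cohomology with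
compact supports, and it passes to locally compact subspaces.

Conversely, collapse a neighbourhood of a compact set `B` onto `B` to extend a cocycle on `B` by
zero to a cochain whose coboundary `ω` is supported in a compact subset of `U \ B`, where `U` is a
precompact open neighbourhood of `B`. If `H^{n+1}_c(U \ B) = 0`, then `ω` has a primitive with
compact support in `U \ B`, and subtracting it gives a cocycle extending the given one.
-/

namespace AS

open Filter Topology Uniformity

section Slice

variable {A X : Type*} {k : ℕ}

/-- The tuples with all entries in `S`. -/
def tuples (S : Set X) (k : ℕ) : Set (Fin k → X) := {s | ∀ i, s i ∈ S}

lemma cons_mem_tuples {S : Set X} {x : X} {s : Fin k → X} :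
    (Fin.cons x s : Fin (k + 1) → X) ∈ tuples S (k + 1) ↔ x ∈ S ∧ s ∈ tuples S k :=
  Fin.forall_fin_succ

lemma tuples_inter (S T : Set X) : tuples (S ∩ T) k = tuples S k ∩ tuples T k :=
  ext fun _ => forall_and

lemma tuples_mono {S T : Set X} (h : S ⊆ T) : tuples S k ⊆ tuples T k :=
  fun _ hs i => h (hs i)

lemma tuples_image {Y : Type*} (f : X → Y) (S : Set X) :
    tuples (f '' S) k = (f ∘ ·) '' tuples S k := by
  ext t
  constructor
  · intro ht
    choose s hs hst using ht
    exact ⟨s, hs, funext hst⟩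
  · rintro ⟨s, hs, rfl⟩ i
    exact mem_image_of_mem f (hs i)

/-- The function of `k` variables obtained from `φ` by fixing its first variable. As an operator on
cochains, `slice x` is the contraction of the cone with apex `x`. -/
def slice (x : X) (φ : (Fin (k + 1) → X) → A) : (Fin k → X) → A :=
  fun s => φ (Fin.cons x s : Fin (k + 1) → X)

lemma eq_of_slice {φ ψ : (Fin (k + 1) → X) → A} (h : ∀ x, slice x φ = slice x ψ) : φ = ψ :=
  funext fun s => by
    simpa only [slice, Fin.cons_self_tail] using congrFun (h (s 0)) (Fin.tail s)

lemma slice_comp {Y : Type*} (r : X → Y) (x : X) (φ : (Fin (k + 1) → Y) → A) :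
    slice x (fun s => φ (r ∘ s)) = fun s => slice (r x) φ (r ∘ s) :=
  funext fun _ => congrArg φ (Fin.comp_cons _ _ _)

end Slice

section Cochains

variable {A : Type*} [AddCommGroup A] {X Y : Type*} {k : ℕ}

lemma slice_add (x : X) (φ ψ : (Fin (k + 1) → X) → A) :
    slice x (φ + ψ) = slice x φ + slice x ψ := rfl

lemma slice_sub (x : X) (φ ψ : (Fin (k + 1) → X) → A) :
    slice x (φ - ψ) = slice x φ - slice x ψ := rfl

/-- The augmented coboundary operator: `AS.d`, together with the inclusion of the constants (which
are the functions of no variables) in the functions of one variable. -/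
def cobd : ((Fin k → X) → A) →+ ((Fin (k + 1) → X) → A) :=
  AddMonoidHom.mk' (fun φ s => ∑ i : Fin (k + 1), ((-1 : ℤ) ^ (i : ℕ)) • φ (s ∘ i.succAbove))
    (fun φ ψ => funext fun s => by simp [smul_add, Finset.sum_add_distrib])

lemma cobd_apply (φ : (Fin k → X) → A) (s : Fin (k + 1) → X) :
    cobd φ s = ∑ i : Fin (k + 1), ((-1 : ℤ) ^ (i : ℕ)) • φ (s ∘ i.succAbove) := rfl

lemma d_eq_cobd (n : ℕ) (φ : Cochain A X n) : d A X n φ = cobd φ := rfl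

lemma cobd_comp (f : X → Y) (φ : (Fin k → Y) → A) :
    cobd (fun t => φ (f ∘ t)) = fun s => cobd φ (f ∘ s) := rfl

lemma cobd_eventuallyEq {F : Filter (Fin k → X)} {G : Filter (Fin (k + 1) → X)}
    (hFG : ∀ i : Fin (k + 1), Tendsto (· ∘ i.succAbove) G F) {φ ψ : (Fin k → X) → A}
    (h : φ =ᶠ[F] ψ) : cobd φ =ᶠ[G] cobd ψ := by
  filter_upwards [eventually_all.2 fun i => (hFG i).eventually h] with s hs
  simp only [cobd_apply, hs]

lemma cobd_eventuallyEq_zero {F : Filter (Fin k → X)} {G : Filter (Fin (k + 1) → X)}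
    (hFG : ∀ i : Fin (k + 1), Tendsto (· ∘ i.succAbove) G F) {φ : (Fin k → X) → A}
    (h : φ =ᶠ[F] 0) : cobd φ =ᶠ[G] 0 := by
  simpa using cobd_eventuallyEq hFG h

lemma eqOn_cobd {S : Set X} {φ ψ : (Fin k → X) → A} (h : EqOn φ ψ (tuples S k)) :
    EqOn (cobd φ) (cobd ψ) (tuples S (k + 1)) := fun s hs => by
  have h_face (i : Fin (k + 1)) : φ (s ∘ i.succAbove) = ψ (s ∘ i.succAbove) := h fun j => hs _
  simp only [cobd_apply, h_face]

lemma cons_comp_succAbove_zero (x : X) (s : Fin k → X) :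
    (Fin.cons x s : Fin (k + 1) → X) ∘ (0 : Fin (k + 1)).succAbove = s :=
  funext fun j => by simp

lemma cons_comp_succAbove_succ (x : X) (s : Fin (k + 1) → X) (i : Fin (k + 1)) :
    (Fin.cons x s : Fin (k + 2) → X) ∘ i.succ.succAbove =
      (Fin.cons x (s ∘ i.succAbove) : Fin (k + 1) → X) :=
  funext fun j => by refine Fin.cases ?_ (fun j => ?_) j <;> simp

lemma slice_cobd (x : X) (φ : (Fin (k + 1) → X) → A) :
    slice x (cobd φ) = φ - cobd (slice x φ) := by
  funext s
  simp only [slice, cobd_apply, Pi.sub_apply]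
  rw [Fin.sum_univ_succ, cons_comp_succAbove_zero]
  simp only [cons_comp_succAbove_succ, Fin.val_zero, pow_zero, one_smul, Fin.val_succ, pow_succ,
    mul_neg, mul_one, neg_smul, Finset.sum_neg_distrib, sub_eq_add_neg]

lemma slice_cobd_zero (x : X) (φ : (Fin 0 → X) → A) : slice x (cobd φ) = φ := by
  funext s
  simp [slice, cobd_apply]

lemma cobd_cobd (φ : (Fin k → X) → A) : cobd (cobd φ) = 0 := by
  induction k with
  | zero =>
    refine eq_of_slice fun x => ?_
    rw [slice_cobd, slice_cobd_zero, sub_self]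
    rfl
  | succ k ih =>
    refine eq_of_slice fun x => ?_
    rw [slice_cobd, slice_cobd, map_sub, ih, sub_zero, sub_self]
    rfl

/-- The prism operator of `r`,
`prism r k φ s = ∑ i, (-1) ^ i • φ (s 0, …, s i, r (s i), …, r (s (k - 1)))`: the cochain homotopy
from the identity to the pullback along `r`. -/
def prism (r : X → X) : (k : ℕ) → ((Fin (k + 1) → X) → A) → ((Fin k → X) → A)
  | 0, _ => 0
  | k + 1, φ => fun s =>
      slice (r (s 0)) (slice (s 0) φ) (r ∘ Fin.tail s) - prism r k (slice (s 0) φ) (Fin.tail s)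

lemma slice_prism (r : X → X) (x : X) (φ : (Fin (k + 2) → X) → A) :
    slice x (prism r (k + 1) φ) =
      (fun s => slice (r x) (slice x φ) (r ∘ s)) - prism r k (slice x φ) :=
  funext fun s => by simp [slice, prism]

lemma prism_sub (r : X → X) (φ ψ : (Fin (k + 1) → X) → A) :
    prism r k (φ - ψ) = prism r k φ - prism r k ψ := by
  induction k with
  | zero => simp [prism]
  | succ k ih =>
    funext s
    change _ - prism r k (slice (s 0) φ - slice (s 0) ψ) (Fin.tail s) = _
    rw [ih]
    exact sub_sub_sub_comm _ _ _ _

lemma prism_cobd_zero (r : X → X) (φ : (Fin 1 → X) → A) :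
    prism r 1 (cobd φ) = (fun s => φ (r ∘ s)) - φ := by
  refine eq_of_slice fun x => ?_
  rw [slice_prism, slice_sub, slice_comp, slice_cobd, slice_sub, slice_cobd_zero]
  funext s
  simp [prism, Subsingleton.elim (r ∘ s) s]

lemma prism_homotopy (r : X → X) (φ : (Fin (k + 1) → X) → A) :
    cobd (prism r k φ) + prism r (k + 1) (cobd φ) = (fun s => φ (r ∘ s)) - φ := by
  induction k with
  | zero => rw [prism_cobd_zero]; simp [prism]
  | succ k ih =>
    refine eq_of_slice fun x => ?_
    simp only [slice_add, slice_sub, slice_comp, slice_prism, slice_cobd, map_sub, prism_sub,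
      cobd_comp]
    have h := eq_sub_of_add_eq' (ih (slice x φ))
    rw [h]
    funext s
    simp only [Pi.add_apply, Pi.sub_apply]
    abel

lemma eqOn_prism_zero {S : Set X} {φ : (Fin (k + 1) → X) → A}
    (hφ : EqOn φ 0 (tuples S (k + 1))) (r : X → X) :
    EqOn (prism r k φ) 0 (tuples (S ∩ r ⁻¹' S) k) := by
  induction k with
  | zero => exact fun _ _ => rfl
  | succ k ih =>
    intro s hs
    have hφ' : EqOn (slice (s 0) φ) 0 (tuples S (k + 1)) := fun t ht =>
      hφ (cons_mem_tuples.2 ⟨(hs 0).1, ht⟩)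
    have hr : (Fin.cons (r (s 0)) (r ∘ Fin.tail s) : Fin (k + 1) → X) ∈ tuples S (k + 1) :=
      cons_mem_tuples.2 ⟨(hs 0).2, fun i => (hs i.succ).2⟩
    exact (congrArg₂ _ (hφ' hr) (ih hφ' fun i => hs i.succ)).trans (sub_self 0)

end Cochains

section TuplesAlong

variable {X Y : Type*} {k : ℕ}

/-- The filter of tuples all of whose entries converge along `l`, i.e. the `k`-th power of `l`. For
`l = 𝓝 x` these are the neighbourhoods of the diagonal at `x`; for `l = coclosedCompact X` they are
the neighbourhoods of infinity. -/
def tuplesAlong (l : Filter X) (k : ℕ) : Filter (Fin k → X) := l.lift' (tuples · k)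

lemma eventually_tuplesAlong {l : Filter X} {p : (Fin k → X) → Prop} :
    (∀ᶠ s in tuplesAlong l k, p s) ↔ ∃ u ∈ l, ∀ s ∈ tuples u k, p s :=
  mem_lift'_sets fun _ _ => tuples_mono

lemma eventually_mem_tuples {l : Filter X} {u : Set X} (hu : u ∈ l) :
    ∀ᶠ s in tuplesAlong l k, s ∈ tuples u k :=
  mem_lift' hu

lemma tendsto_tuplesAlong {l : Filter X} {l' : Filter Y} {f : X → Y} (hf : Tendsto f l l') :
    Tendsto (f ∘ ·) (tuplesAlong l k) (tuplesAlong l' k) :=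
  tendsto_lift'.2 fun _ hu => eventually_mem_tuples (l := l) (hf hu)

lemma map_tuplesAlong (f : X → Y) (l : Filter X) :
    map (f ∘ ·) (tuplesAlong l k) = tuplesAlong (map f l) k := by
  simp only [tuplesAlong, map_lift'_eq (fun _ _ => tuples_mono),
    map_lift'_eq2 (fun _ _ => tuples_mono), Function.comp_def, tuples_image]

lemma tuplesAlong_bot : tuplesAlong (⊥ : Filter X) (k + 1) = ⊥ :=
  empty_mem_iff_bot.1 <| mem_of_superset (mem_lift' (mem_bot : ∅ ∈ ⊥)) fun _ hs => hs 0

lemma tendsto_succAbove_tuplesAlong (l : Filter X) (i : Fin (k + 1)) :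
    Tendsto (· ∘ i.succAbove) (tuplesAlong l (k + 1)) (tuplesAlong l k) :=
  tendsto_lift'.2 fun _ hu => (eventually_mem_tuples hu).mono fun _ hs _ => hs _

lemma tendsto_cons_tuplesAlong_nhds [TopologicalSpace X] (x : X) :
    Tendsto (fun s => (Fin.cons x s : Fin (k + 1) → X)) (tuplesAlong (𝓝 x) k)
      (tuplesAlong (𝓝 x) (k + 1)) :=
  tendsto_lift'.2 fun _ hu => (eventually_mem_tuples hu).mono fun _ hs =>
    cons_mem_tuples.2 ⟨mem_of_mem_nhds hu, hs⟩

end TuplesAlong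

section Extension

variable {A : Type*} [AddCommGroup A] {X Y : Type*} {f : X → Y}

lemma exists_pull_eq_of_eqOn_zero (hf : Injective f) {n : ℕ} {φ : Cochain A X n} {S : Set X}
    (hφ : EqOn φ 0 (tuples Sᶜ (n + 1))) :
    ∃ ψ : Cochain A Y n, pull A f n ψ = φ ∧ EqOn ψ 0 (tuples (f '' S)ᶜ (n + 1)) := by
  refine ⟨Function.extend (f ∘ ·) φ 0, funext fun _ => hf.comp_left.extend_apply _ _ _, ?_⟩
  intro t ht
  by_cases h_range : ∃ s, f ∘ s = t
  · obtain ⟨s, rfl⟩ := h_range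
    rw [hf.comp_left.extend_apply]
    exact hφ fun i => notMem_subset (preimage_image_eq S hf).ge (ht i)
  · exact Function.extend_apply' _ _ _ h_range

lemma pull_surjective (hf : Injective f) (n : ℕ) : Surjective (pull A f n) := fun φ =>
  have hφ : EqOn φ 0 (tuples univᶜ (n + 1)) := fun _ hs => (hs 0 (mem_univ _)).elim
  (exists_pull_eq_of_eqOn_zero hf hφ).imp fun _ => And.left

end Extension

section AlexanderSpanier

variable {A : Type*} [AddCommGroup A] {X Y : Type*} [TopologicalSpace X] [TopologicalSpace Y]
  {n : ℕ}

lemma mem_locZero_iff {φ : Cochain A X n} :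
    φ ∈ locZero A X n ↔ ∀ x, φ =ᶠ[tuplesAlong (𝓝 x) (n + 1)] 0 := by
  constructor
  · rintro ⟨U, ⟨hU_open, hU_univ⟩, hφ⟩ x
    obtain ⟨u, hu, hx⟩ := hU_univ.ge (mem_univ x)
    exact eventually_tuplesAlong.2
      ⟨u, (hU_open u hu).mem_nhds hx, fun s hs => hφ s ⟨u, hu, hs⟩⟩
  · intro hφ
    choose u hu hφu using fun x => eventually_tuplesAlong.1 (hφ x)
    refine ⟨range fun x => interior (u x), ⟨?_, ?_⟩, ?_⟩
    · exact forall_mem_range.2 fun _ => isOpen_interior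
    · exact eq_univ_of_forall fun x => ⟨_, mem_range_self x, mem_interior_iff_mem_nhds.2 (hu x)⟩
    · rintro s ⟨_, ⟨x, rfl⟩, hs⟩
      exact hφu x s fun i => interior_subset (hs i)

lemma mk_mem_cocycles_iff {φ : Cochain A X n} :
    (QuotientAddGroup.mk φ : QC A X n) ∈ cocycles A X n ↔ d A X n φ ∈ locZero A X (n + 1) :=
  QuotientAddGroup.eq_zero_iff (d A X n φ)

lemma mk_mem_cobounds_succ_iff {φ : Cochain A X (n + 1)} :
    (QuotientAddGroup.mk φ : QC A X (n + 1)) ∈ cobounds A X (n + 1) ↔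
      ∃ β, φ - d A X n β ∈ locZero A X (n + 1) := by
  refine QuotientAddGroup.mk_surjective.exists.trans (exists_congr fun β => ?_)
  rw [sub_eq_neg_add]
  exact QuotientAddGroup.eq

lemma cobounds_le_cocycles (n : ℕ) : cobounds A X n ≤ cocycles A X n := by
  cases n with
  | zero => exact bot_le
  | succ n =>
    rintro _ ⟨x, rfl⟩
    obtain ⟨β, rfl⟩ := QuotientAddGroup.mk_surjective x
    exact congrArg QuotientAddGroup.mk (cobd_cobd β)

/-- The cohomology class of a cocycle. -/
def cohClass (x : cocycles A X n) : ASH A n X := QuotientAddGroup.mk x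

lemma cohClass_surjective : Surjective (cohClass : cocycles A X n → ASH A n X) :=
  QuotientAddGroup.mk_surjective

lemma cohClass_eq_iff {x y : cocycles A X n} :
    cohClass x = cohClass y ↔ (-x + y : QC A X n) ∈ cobounds A X n :=
  QuotientAddGroup.eq

lemma subsingleton_ASH_iff : Subsingleton (ASH A n X) ↔ cocycles A X n ≤ cobounds A X n := by
  constructor
  · intro h x hx
    simpa using cohClass_eq_iff.1 (h.elim (cohClass 0) (cohClass ⟨x, hx⟩))
  · exact fun h => ⟨cohClass_surjective.forall₂.2 fun x y => cohClass_eq_iff.2 (h (-x + y).2)⟩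

lemma subsingleton_ASH_succ_iff :
    Subsingleton (ASH A (n + 1) X) ↔ ∀ φ : Cochain A X (n + 1),
      d A X (n + 1) φ ∈ locZero A X (n + 2) → ∃ β, φ - d A X n β ∈ locZero A X (n + 1) :=
  subsingleton_ASH_iff.trans <| QuotientAddGroup.mk_surjective.forall.trans <|
    forall_congr' fun _ => imp_congr mk_mem_cocycles_iff mk_mem_cobounds_succ_iff

lemma cobounds_le_map_pullQ {f : X → Y} (hf : Continuous f) (hf' : Injective f) (n : ℕ) :
    cobounds A X n ≤ (cobounds A Y n).map (pullQ A hf n) := by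
  cases n with
  | zero => exact bot_le
  | succ n =>
    rintro _ ⟨x, rfl⟩
    obtain ⟨β, rfl⟩ := QuotientAddGroup.mk_surjective x
    obtain ⟨β', rfl⟩ := pull_surjective hf' n β
    exact ⟨_, ⟨QuotientAddGroup.mk β', rfl⟩, rfl⟩

lemma surjective_ASHmap_iff_cocycles {f : X → Y} (hf : Continuous f) (hf' : Injective f) :
    Surjective (ASHmap A hf n) ↔
      ∀ x ∈ cocycles A X n, ∃ y ∈ cocycles A Y n, pullQ A hf n y = x := by
  constructor
  · intro h x hx
    obtain ⟨c, hc⟩ := h (cohClass ⟨x, hx⟩)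
    obtain ⟨⟨y, hy⟩, rfl⟩ := cohClass_surjective c
    obtain ⟨z, hz, hzx⟩ := cobounds_le_map_pullQ hf hf' n (cohClass_eq_iff.1 hc)
    refine ⟨y + z, add_mem hy (cobounds_le_cocycles n hz), ?_⟩
    rw [map_add, hzx]
    exact add_neg_cancel_left _ _
  · intro h c
    obtain ⟨⟨x, hx⟩, rfl⟩ := cohClass_surjective c
    obtain ⟨y, hy, rfl⟩ := h x hx
    exact ⟨cohClass ⟨y, hy⟩, rfl⟩

lemma surjective_ASHmap_iff {f : X → Y} (hf : Continuous f) (hf' : Injective f) :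
    Surjective (ASHmap A hf n) ↔ ∀ φ : Cochain A X n, d A X n φ ∈ locZero A X (n + 1) →
      ∃ ψ : Cochain A Y n, d A Y n ψ ∈ locZero A Y (n + 1) ∧
        pull A f n ψ - φ ∈ locZero A X n := by
  rw [surjective_ASHmap_iff_cocycles hf hf', QuotientAddGroup.mk_surjective.forall]
  refine forall_congr' fun φ => imp_congr mk_mem_cocycles_iff ?_
  rw [QuotientAddGroup.mk_surjective.exists]
  refine exists_congr fun ψ => and_congr mk_mem_cocycles_iff ?_
  exact QuotientAddGroup.eq_iff_sub_mem

end AlexanderSpanier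

section CompactSupports

variable {A : Type*} [AddCommGroup A] {X Z : Type*} [TopologicalSpace X] [TopologicalSpace Z]
  {k m n : ℕ}

lemma subsingleton_ASH_succ_iff_of_point (x : X) :
    Subsingleton (ASH A (m + 1) X) ↔ ∀ φ : Cochain A X (m + 1),
      φ =ᶠ[tuplesAlong (𝓝 x) (m + 2)] 0 → d A X (m + 1) φ ∈ locZero A X (m + 2) →
        ∃ β : Cochain A X m, β =ᶠ[tuplesAlong (𝓝 x) (m + 1)] 0 ∧
          φ - d A X m β ∈ locZero A X (m + 1) := by
  have d_slice {n : ℕ} (φ : Cochain A X n) :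
      d A X n (slice x (d A X n φ)) = d A X n φ := by
    simp only [d_eq_cobd, slice_cobd, map_sub, cobd_cobd, sub_zero]
  have slice_zero {n : ℕ} {φ : Cochain A X (n + 1)} (hφ : φ =ᶠ[tuplesAlong (𝓝 x) (n + 2)] 0) :
      slice x φ =ᶠ[tuplesAlong (𝓝 x) (n + 1)] 0 :=
    (tendsto_cons_tuplesAlong_nhds x).eventually hφ
  rw [subsingleton_ASH_succ_iff]
  constructor
  · intro h φ hφ hdφ
    obtain ⟨χ, hχ⟩ := h φ hdφ
    refine ⟨slice x (d A X m χ), slice_zero ?_, by rwa [d_slice]⟩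
    simpa using hφ.sub (mem_locZero_iff.1 hχ x)
  · intro h φ hdφ
    obtain ⟨β, -, hβ⟩ := h (slice x (d A X (m + 1) φ)) (slice_zero (mem_locZero_iff.1 hdφ x))
      (by rwa [d_slice])
    refine ⟨slice x φ + β, ?_⟩
    rwa [map_add, ← sub_sub, d_eq_cobd, ← slice_cobd, ← d_eq_cobd]

lemma mem_locZero_onePoint_iff {Φ : Cochain A (OnePoint Z) n} :
    Φ ∈ locZero A (OnePoint Z) n ↔ Φ =ᶠ[tuplesAlong (𝓝 OnePoint.infty) (n + 1)] 0 ∧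
      pull A (OnePoint.some : Z → OnePoint Z) n Φ ∈ locZero A Z n := by
  simp only [mem_locZero_iff, OnePoint.forall]
  refine and_congr_right fun _ => forall_congr' fun z => ?_
  rw [OnePoint.nhds_coe_eq, ← map_tuplesAlong]
  rfl

lemma exists_pull_onePoint_eq {φ : Cochain A Z n}
    (hφ : φ =ᶠ[tuplesAlong (coclosedCompact Z) (n + 1)] 0) :
    ∃ Φ : Cochain A (OnePoint Z) n, pull A OnePoint.some n Φ = φ ∧
      Φ =ᶠ[tuplesAlong (𝓝 OnePoint.infty) (n + 1)] 0 := by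
  obtain ⟨u, hu, hφu⟩ := eventually_tuplesAlong.1 hφ
  obtain ⟨Φ, hΦφ, hΦu⟩ := exists_pull_eq_of_eqOn_zero (S := uᶜ) OnePoint.coe_injective
    (φ := φ) (by rwa [compl_compl])
  refine ⟨Φ, hΦφ, eventually_tuplesAlong.2 ⟨_, ?_, hΦu⟩⟩
  simpa [OnePoint.nhds_infty_eq, preimage_image_eq _ OnePoint.coe_injective] using hu

lemma eventuallyEq_zero_coclosedCompact [T2Space X] {K : Set X} (hK : IsCompact K)
    {φ : (Fin k → X) → A} (hφ : EqOn φ 0 (tuples Kᶜ k)) :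
    φ =ᶠ[tuplesAlong (coclosedCompact X) k] 0 :=
  eventually_tuplesAlong.2 ⟨_, hK.compl_mem_coclosedCompact_of_isClosed hK.isClosed, hφ⟩

lemma mem_locZero_of_pull_mem_locZero {K V : Set X} (hK : IsClosed K) (hV : IsOpen V)
    (hKV : K ⊆ V) {φ : Cochain A X n} (hφK : EqOn φ 0 (tuples Kᶜ (n + 1)))
    (hφ : pull A ((↑) : V → X) n φ ∈ locZero A V n) : φ ∈ locZero A X n := by
  refine mem_locZero_iff.2 fun x => ?_
  by_cases hx : x ∈ V
  · rw [← hV.isOpenEmbedding_subtypeVal.map_nhds_eq ⟨x, hx⟩, ← map_tuplesAlong]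
    exact mem_locZero_iff.1 hφ ⟨x, hx⟩
  · exact eventually_tuplesAlong.2
      ⟨Kᶜ, hK.isOpen_compl.mem_nhds (notMem_subset hKV hx), hφK⟩

/-- Vanishing of the compactly supported cohomology of `Z` in degree `m + 1`, in terms of cochains
on `Z` itself: support in a compact set is encoded as vanishing along `coclosedCompact Z`. -/
def AcyclicWithCompactSupports (A : Type*) [AddCommGroup A] (Z : Type*) [TopologicalSpace Z]
    (m : ℕ) : Prop :=
  ∀ φ : Cochain A Z (m + 1), φ =ᶠ[tuplesAlong (coclosedCompact Z) (m + 2)] 0 →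
    d A Z (m + 1) φ ∈ locZero A Z (m + 2) → ∃ β : Cochain A Z m,
      β =ᶠ[tuplesAlong (coclosedCompact Z) (m + 1)] 0 ∧ φ - d A Z m β ∈ locZero A Z (m + 1)

lemma subsingleton_ASH_onePoint_iff :
    Subsingleton (ASH A (m + 1) (OnePoint Z)) ↔ AcyclicWithCompactSupports A Z m := by
  rw [subsingleton_ASH_succ_iff_of_point OnePoint.infty]
  have h_cobd {n : ℕ} {Φ : Cochain A (OnePoint Z) n}
      (hΦ : Φ =ᶠ[tuplesAlong (𝓝 OnePoint.infty) (n + 1)] 0) :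
      d A (OnePoint Z) n Φ =ᶠ[tuplesAlong (𝓝 OnePoint.infty) (n + 2)] 0 :=
    cobd_eventuallyEq_zero (tendsto_succAbove_tuplesAlong _) hΦ
  constructor
  · intro h φ hφ hdφ
    obtain ⟨Φ, rfl, hΦ⟩ := exists_pull_onePoint_eq hφ
    obtain ⟨β, hβ, hΦβ⟩ := h Φ hΦ (mem_locZero_onePoint_iff.2 ⟨h_cobd hΦ, hdφ⟩)
    exact ⟨pull A OnePoint.some m β,
      (tendsto_tuplesAlong OnePoint.tendsto_coe_infty).eventually hβ,
      (mem_locZero_onePoint_iff.1 hΦβ).2⟩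
  · intro h Φ hΦ hdΦ
    obtain ⟨β, hβ, hΦβ⟩ := h (pull A OnePoint.some (m + 1) Φ)
      ((tendsto_tuplesAlong OnePoint.tendsto_coe_infty).eventually hΦ)
      (mem_locZero_onePoint_iff.1 hdΦ).2
    obtain ⟨β', rfl, hβ'⟩ := exists_pull_onePoint_eq hβ
    exact ⟨β', hβ', mem_locZero_onePoint_iff.2 ⟨by simpa using hΦ.sub (h_cobd hβ'), hΦβ⟩⟩

lemma coclosedCompact_eq_bot [CompactSpace Z] : coclosedCompact Z = ⊥ :=
  empty_mem_iff_bot.1 <| by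
    simpa using isCompact_univ.compl_mem_coclosedCompact_of_isClosed isClosed_univ

lemma subsingleton_ASH_succ_iff_of_compactSpace [CompactSpace Z] :
    Subsingleton (ASH A (m + 1) Z) ↔ AcyclicWithCompactSupports A Z m := by
  simp [subsingleton_ASH_succ_iff, AcyclicWithCompactSupports, coclosedCompact_eq_bot,
    tuplesAlong_bot, Filter.EventuallyEq]

lemma subsingleton_Hc_succ_iff :
    Subsingleton (Hc A (m + 1) Z) ↔ AcyclicWithCompactSupports A Z m := by
  rw [Hc]
  split_ifs with h
  · exact subsingleton_ASH_succ_iff_of_compactSpace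
  · exact subsingleton_ASH_onePoint_iff

lemma cohDim_le_iff_subsingleton : cohDim A X ≤ n ↔
    ∀ m, n < m → ∀ B : Set X, LocallyCompactSpace B → Subsingleton (Hc A m B) := by
  rw [cohDim, sSup_le_iff]
  constructor
  · intro h m hm B hB
    by_contra hs
    exact (h m ⟨m, rfl, B, hB, not_subsingleton_iff_nontrivial.1 hs⟩).not_gt (Nat.cast_lt.2 hm)
  · rintro h _ ⟨m, rfl, B, hB, hN⟩
    by_contra hm
    exact not_subsingleton_iff_nontrivial.2 hN (h m (Nat.cast_lt.1 (not_le.1 hm)) B hB)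

end CompactSupports

section SmallTuples

variable {X Y : Type*} [UniformSpace X] [UniformSpace Y] {k : ℕ} {B C K S : Set X}
  {p : (Fin k → X) → Prop}

/-- The filter of tuples in `C` whose entries are uniformly close to each other. Two functions agree
along it if and only if they agree on all sufficiently small tuples in `C`. -/
def smallTuples (C : Set X) (k : ℕ) : Filter (Fin k → X) :=
  (𝓤 X).lift' fun V => {s | s ∈ tuples C k ∧ ∀ i j, (s i, s j) ∈ V}

lemma eventually_smallTuples :
    (∀ᶠ s in smallTuples C k, p s) ↔
      ∃ V ∈ 𝓤 X, ∀ s ∈ tuples C k, (∀ i j, (s i, s j) ∈ V) → p s := by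
  refine (mem_lift'_sets fun V W h s hs => ?_).trans <| exists_congr fun V =>
    and_congr_right fun _ => forall_congr' fun s => and_imp
  exact ⟨hs.1, fun i j => h (hs.2 i j)⟩

lemma eventually_small (C : Set X) (k : ℕ) {V : Set (X × X)} (hV : V ∈ 𝓤 X) :
    ∀ᶠ s in smallTuples C k, s ∈ tuples C k ∧ ∀ i j, (s i, s j) ∈ V :=
  mem_lift' hV

lemma smallTuples_mono (h : B ⊆ C) : smallTuples B k ≤ smallTuples C k :=
  lift'_mono' fun _ _ _ hs => ⟨tuples_mono h hs.1, hs.2⟩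

lemma smallTuples_empty : smallTuples (∅ : Set X) (k + 1) = ⊥ :=
  empty_mem_iff_bot.1 <| mem_of_superset (mem_lift' univ_mem) fun _ hs => hs.1 0

lemma eventually_of_mem_tuples (h : ∀ᶠ s in smallTuples K k, p s) (B : Set X) :
    ∀ᶠ s in smallTuples B k, s ∈ tuples K k → p s := by
  obtain ⟨V, hV, hp⟩ := eventually_smallTuples.1 h
  exact eventually_smallTuples.2 ⟨V, hV, fun s _ hsV hsK => hp s hsK hsV⟩

lemma tendsto_succAbove_smallTuples (C : Set X) (i : Fin (k + 1)) :
    Tendsto (· ∘ i.succAbove) (smallTuples C (k + 1)) (smallTuples C k) :=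
  tendsto_lift'.2 fun _ hV => (eventually_small C (k + 1) hV).mono fun _ hs =>
    ⟨fun _ => hs.1 _, fun _ _ => hs.2 _ _⟩

lemma map_smallTuples {f : Y → X} (hf : IsUniformInducing f) (B : Set Y) :
    map (f ∘ ·) (smallTuples B k) = smallTuples (f '' B) k := by
  refine Filter.ext fun P => eventually_smallTuples.trans (Iff.trans ?_ eventually_smallTuples.symm)
  simp only [tuples_image, forall_mem_image]
  refine (hf.basis_uniformity (𝓤 X).basis_sets).exists_iff fun V W h hW s hs hsV => ?_
  exact hW s hs fun i j => h (hsV i j)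

lemma tuplesAlong_nhds_le_smallTuples (x : X) : tuplesAlong (𝓝 x) k ≤ smallTuples univ k := by
  intro P hP
  obtain ⟨V, hV, hPV⟩ := eventually_smallTuples.1 hP
  obtain ⟨W, hW, hW_symm, hWV⟩ := comp_symm_mem_uniformity_sets hV
  filter_upwards [eventually_mem_tuples (UniformSpace.ball_mem_nhds x hW)] with s hs
  exact hPV s (fun _ => mem_univ _) fun i j => hWV ⟨x, hW_symm.symm _ _ (hs i), hs j⟩

lemma eventually_mem_tuples_of_mem_nhdsSet {O : Set X} (hK : IsCompact K) (hO : O ∈ 𝓝ˢ K)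
    (B : Set X) (k : ℕ) : ∀ᶠ s in smallTuples B k, ∀ i, s i ∈ K → s ∈ tuples O k := by
  obtain ⟨V, hV, hVO⟩ := (hK.nhdsSet_basis_uniformity (𝓤 X).basis_sets).mem_iff.1 hO
  filter_upwards [eventually_small B k hV] with s hs i hi j
  exact hVO (mem_biUnion hi (hs.2 i j))

end SmallTuples

section Retraction

variable {X : Type*} [UniformSpace X] {V : Set (X × X)}

lemma exists_entourage_close (hV : V ∈ 𝓤 X) :
    ∃ W ∈ 𝓤 X, ∀ r : X → X, (∀ x, (x, r x) ∈ W) → ∀ x y, (x, y) ∈ W →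
      (x, y) ∈ V ∧ (x, r y) ∈ V ∧ (r x, y) ∈ V ∧ (r x, r y) ∈ V := by
  obtain ⟨W, hW, hW_symm, hWV⟩ := comp_comp_symm_mem_uniformity_sets hV
  refine ⟨W, hW, fun r hr x y hxy => ?_⟩
  have hx : (x, x) ∈ W := refl_mem_uniformity hW
  have hy : (y, y) ∈ W := refl_mem_uniformity hW
  have hrx : (r x, x) ∈ W := hW_symm.symm _ _ (hr x)
  have path {a b : X} (ha : (a, x) ∈ W) (hb : (y, b) ∈ W) : (a, b) ∈ V :=
    hWV ⟨y, ⟨x, ha, hxy⟩, hb⟩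
  exact ⟨path hx hy, path hx (hr y), path hrx hy, path hrx (hr y)⟩

lemma exists_retraction (hV : V ∈ 𝓤 X) (L : Set X) :
    ∃ r : X → X, (∀ x, (x, r x) ∈ V) ∧ EqOn r id L ∧ (∀ x, r x = x ∨ r x ∈ L) ∧
      ∀ᶠ x in 𝓝ˢ L, r x ∈ L := by
  have exists_point (x : X) : ∃ y, (x, y) ∈ V ∧ (x ∈ L → y = x) ∧ (y = x ∨ y ∈ L) ∧
      ((∃ y ∈ L, (x, y) ∈ V) → y ∈ L) := by
    by_cases hxL : x ∈ L
    · exact ⟨x, refl_mem_uniformity hV, fun _ => rfl, .inl rfl, fun _ => hxL⟩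
    by_cases hx : ∃ y ∈ L, (x, y) ∈ V
    · obtain ⟨y, hyL, hy⟩ := hx
      exact ⟨y, hy, fun h => (hxL h).elim, .inr hyL, fun _ => hyL⟩
    · exact ⟨x, refl_mem_uniformity hV, fun _ => rfl, .inl rfl, fun h => (hx h).elim⟩
  choose r hrV hr_id hr hrL using exists_point
  refine ⟨r, hrV, hr_id, hr, mem_nhdsSet_iff_forall.2 fun y hy => ?_⟩
  filter_upwards [mem_nhds_right y hV] with x hx
  exact hrL x ⟨y, hy, hx⟩

end Retraction

section LocallyZero

variable {A : Type*} [AddCommGroup A] {X : Type*} [UniformSpace X] {n : ℕ} {B : Set X}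

lemma mem_locZero_of_smallTuples {φ : Cochain A X n} (hφ : φ =ᶠ[smallTuples univ (n + 1)] 0) :
    φ ∈ locZero A X n :=
  mem_locZero_iff.2 fun x => tuplesAlong_nhds_le_smallTuples x hφ

lemma mem_locZero_iff_smallTuples {φ : Cochain A X n}
    (hφ : φ =ᶠ[tuplesAlong (coclosedCompact X) (n + 1)] 0) :
    φ ∈ locZero A X n ↔ φ =ᶠ[smallTuples univ (n + 1)] 0 := by
  refine ⟨fun h => ?_, mem_locZero_of_smallTuples⟩
  obtain ⟨u, hu, hφu⟩ := eventually_tuplesAlong.1 hφ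
  have hK : IsCompact (closure uᶜ) := mem_coclosedCompact_iff.1 hu
  choose U hU hφU using fun x => eventually_tuplesAlong.1 (mem_locZero_iff.1 h x)
  obtain ⟨V, hV, hVU⟩ := lebesgue_number_lemma_nhds hK fun x _ => hU x
  filter_upwards [eventually_small univ (n + 1) hV] with s hs
  by_cases hsK : ∃ i, s i ∈ closure uᶜ
  · obtain ⟨i, hi⟩ := hsK
    obtain ⟨y, hy⟩ := hVU _ hi
    exact hφU y s fun j => hy (hs.2 i j)
  · exact hφu s fun i => by_contra fun hi => hsK ⟨i, subset_closure hi⟩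

lemma pull_mem_locZero_iff (hB : IsCompact B) {φ : Cochain A X n} :
    pull A ((↑) : B → X) n φ ∈ locZero A B n ↔ φ =ᶠ[smallTuples B (n + 1)] 0 := by
  have := isCompact_iff_compactSpace.1 hB
  have h_infty : pull A ((↑) : B → X) n φ =ᶠ[tuplesAlong (coclosedCompact B) (n + 1)] 0 := by
    rw [coclosedCompact_eq_bot, tuplesAlong_bot]
    exact eventually_bot
  have h_map : map (((↑) : B → X) ∘ ·) (smallTuples univ (n + 1)) = smallTuples B (n + 1) := by
    rw [map_smallTuples (isUniformInducing_val B), image_univ, Subtype.range_coe]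
  rw [mem_locZero_iff_smallTuples h_infty, ← h_map]
  rfl

end LocallyZero

section Cutoff

variable {A : Type*} [AddCommGroup A] {X : Type*} [UniformSpace X] {k : ℕ} {B C K S : Set X}

lemma exists_eqOn_zero_eventuallyEq {φ : (Fin k → X) → A}
    (hφ : φ =ᶠ[smallTuples (K ∩ S) k] 0) :
    ∃ φ' : (Fin k → X) → A, EqOn φ' 0 (tuples S k) ∧ φ' =ᶠ[smallTuples K k] φ := by
  refine ⟨(tuples S k)ᶜ.indicator φ, fun s hs => indicator_of_notMem (not_not.2 hs) φ, ?_⟩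
  filter_upwards [eventually_of_mem_tuples hφ K, eventually_small K k univ_mem] with s hs hsK
  by_cases hsS : s ∈ tuples S k
  · rw [indicator_of_notMem (not_not.2 hsS), hs fun i => ⟨hsK.1 i, hsS i⟩]
    rfl
  · exact indicator_of_mem hsS φ

lemma exists_close_comp {p : (Fin k → X) → Prop} (hp : ∀ᶠ s in smallTuples B k, p s) :
    ∃ W ∈ 𝓤 X, ∀ r : X → X, (∀ x, (x, r x) ∈ W) → ∀ C, MapsTo r C B →
      ∀ᶠ s in smallTuples C k, p (r ∘ s) := by
  obtain ⟨V, hV, hpV⟩ := eventually_smallTuples.1 hp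
  obtain ⟨W, hW, hWV⟩ := exists_entourage_close hV
  refine ⟨W, hW, fun r hr C hC => (eventually_small C k hW).mono fun s hs => ?_⟩
  exact hpV _ (fun i => hC (hs.1 i)) fun i j => (hWV r hr _ _ (hs.2 i j)).2.2.2

lemma exists_close_cobd_prism {φ : (Fin (k + 1) → X) → A}
    (hφ : cobd φ =ᶠ[smallTuples B (k + 2)] 0) :
    ∃ W ∈ 𝓤 X, ∀ r : X → X, (∀ x, (x, r x) ∈ W) → MapsTo r B B →
      cobd (prism r k φ) =ᶠ[smallTuples B (k + 1)] (fun s => φ (r ∘ s)) - φ := by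
  obtain ⟨V, hV, hφV⟩ := eventually_smallTuples.1 hφ
  obtain ⟨W, hW, hWV⟩ := exists_entourage_close hV
  refine ⟨W, hW, fun r hr hrB => ?_⟩
  filter_upwards [eventually_small B (k + 1) hW] with s ⟨hsB, hsW⟩
  set S := range s ∪ range (r ∘ s)
  have h_zero : EqOn (cobd φ) 0 (tuples S (k + 2)) := by
    intro t ht
    refine hφV t (fun i => ?_) fun i j => ?_
    · obtain ⟨a, ha⟩ | ⟨a, ha⟩ := ht i <;> rw [← ha]
      exacts [hsB a, hrB (hsB a)]
    · obtain ⟨a, ha⟩ | ⟨a, ha⟩ := ht i <;> obtain ⟨b, hb⟩ | ⟨b, hb⟩ := ht j <;> rw [← ha, ← hb]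
      exacts [(hWV r hr _ _ (hsW a b)).1, (hWV r hr _ _ (hsW a b)).2.1,
        (hWV r hr _ _ (hsW a b)).2.2.1, (hWV r hr _ _ (hsW a b)).2.2.2]
  have hsS : s ∈ tuples (S ∩ r ⁻¹' S) (k + 1) := fun i =>
    ⟨.inl (mem_range_self i), .inr (mem_range_self i)⟩
  rw [← prism_homotopy r φ, Pi.add_apply, eqOn_prism_zero h_zero r hsS]
  exact (add_zero _).symm

end Cutoff

section Gluing

variable {A : Type*} [AddCommGroup A] {X Y : Type*} [UniformSpace X] [UniformSpace Y] {k n : ℕ}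
  {B F K K₁ K₂ : Set X}

lemma exists_primitive_of_cover (hK : IsCompact K) (hF : IsClosed F) (hKB : K ⊆ B)
    (hBKF : B ⊆ K ∪ F) {φ : (Fin (k + 2) → X) → A} {β : (Fin (k + 1) → X) → A}
    (hφ : cobd φ =ᶠ[smallTuples B (k + 3)] 0) (hφF : EqOn φ 0 (tuples (B ∩ F) (k + 2)))
    (hβ : φ =ᶠ[smallTuples K (k + 2)] cobd β) (hβF : EqOn β 0 (tuples F (k + 1))) :
    ∃ γ : (Fin (k + 1) → X) → A,
      φ =ᶠ[smallTuples B (k + 2)] cobd γ ∧ EqOn γ 0 (tuples (B \ K) (k + 1)) := by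
  obtain ⟨V, hV, h_prism⟩ := exists_close_cobd_prism hφ
  obtain ⟨W, hW, h_comp⟩ := exists_close_comp hβ
  obtain ⟨r, hrVW, -, hr, hrL⟩ := exists_retraction (inter_mem hV hW) (K ∩ F)
  have mapsTo_r {S : Set X} (hS : K ∩ F ⊆ S) : MapsTo r S S := fun x hx =>
    (hr x).elim (fun h => h.symm ▸ hx) fun h => hS h
  have hLB : K ∩ F ⊆ B ∩ F := inter_subset_inter_left F hKB
  refine ⟨(fun s => β (r ∘ s)) - prism r (k + 1) φ, ?_, fun s hs => ?_⟩
  · let N := {x | r x ∈ K ∩ F}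
    have hFN : Fᶜ ∈ 𝓝ˢ (K \ interior N) := hF.isOpen_compl.mem_nhdsSet.2 fun x hx hxF =>
      hx.2 (subset_interior_iff_mem_nhdsSet.2 hrL ⟨hx.1, hxF⟩)
    filter_upwards [h_prism r (fun x => (hrVW x).1) (mapsTo_r (hLB.trans inter_subset_left)),
      eventually_of_mem_tuples (h_comp r (fun x => (hrVW x).2) K (mapsTo_r inter_subset_left)) B,
      eventually_mem_tuples_of_mem_nhdsSet (hK.diff isOpen_interior) hFN B (k + 2),
      eventually_small B (k + 2) univ_mem] with s hs_prism hs_comp hs_far hsB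
    have hrs : cobd β (r ∘ s) = φ (r ∘ s) := by
      by_cases hs : ∃ i, s i ∈ K \ interior N
      · obtain ⟨i, hi⟩ := hs
        exact (hs_comp fun j => (hBKF (hsB.1 j)).resolve_right (hs_far i hi j)).symm
      · have hrsF : r ∘ s ∈ tuples (B ∩ F) (k + 2) := fun i => by
          by_cases hiN : s i ∈ N
          · exact hLB hiN
          · have hiK : s i ∉ K := fun hiK => hs ⟨i, hiK, fun h => hiN (interior_subset h)⟩
            exact mapsTo_r hLB ⟨hsB.1 i, (hBKF (hsB.1 i)).resolve_left hiK⟩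
        rw [hφF hrsF, eqOn_cobd hβF (tuples_mono inter_subset_right hrsF), map_zero]
    simp only [map_sub, cobd_comp, Pi.sub_apply, hs_prism, hrs, sub_sub_cancel]
  · have hsBF : s ∈ tuples (B ∩ F) (k + 1) := fun i =>
      ⟨(hs i).1, (hBKF (hs i).1).resolve_left (hs i).2⟩
    have hrs : β (r ∘ s) = 0 := hβF fun i => mapsTo_r inter_subset_right (hsBF i).2
    rw [Pi.sub_apply, hrs, eqOn_prism_zero hφF r fun i => ⟨hsBF i, mapsTo_r hLB (hsBF i)⟩]
    exact sub_zero 0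

/-- Every Alexander–Spanier `n`-cocycle on a compact subset of `X` extends, up to locally zero
cochains, to a cocycle on every larger compact subset. Cochains on subsets are represented by
cochains on `X`. -/
def ExtendsCocycles (A : Type*) [AddCommGroup A] (X : Type*) [UniformSpace X] (n : ℕ) : Prop :=
  ∀ ⦃B C : Set X⦄, IsCompact B → IsCompact C → B ⊆ C → ∀ φ : Cochain A X n,
    cobd φ =ᶠ[smallTuples B (n + 2)] 0 → ∃ ψ : Cochain A X n,
      cobd ψ =ᶠ[smallTuples C (n + 2)] 0 ∧ ψ =ᶠ[smallTuples B (n + 1)] φ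

lemma extendsCocycles_iff : ExtendsCocycles A X n ↔
    ∀ B C : Set X, IsCompact B → IsCompact C → ∀ hBC : B ⊆ C,
      Surjective (ASHmap A (continuous_inclusion hBC) n) := by
  refine forall₂_congr fun B C => forall₃_congr fun hB hC hBC => ?_
  rw [surjective_ASHmap_iff _ (inclusion_injective hBC),
    (pull_surjective Subtype.val_injective n).forall]
  refine forall_congr' fun φ => imp_congr (pull_mem_locZero_iff hB).symm ?_
  rw [(pull_surjective Subtype.val_injective n).exists]
  refine exists_congr fun ψ => and_congr (pull_mem_locZero_iff hC).symm ?_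
  exact eventuallyEq_iff_sub.trans (pull_mem_locZero_iff hB).symm

lemma ExtendsCocycles.of_isUniformEmbedding (h : ExtendsCocycles A X n) {f : Y → X}
    (hf : IsUniformEmbedding f) : ExtendsCocycles A Y n := by
  intro B C hB hC hBC φ hφ
  obtain ⟨φ, rfl⟩ := pull_surjective hf.injective n φ
  have h_map {k : ℕ} (D : Set Y) := map_smallTuples (k := k) hf.isUniformInducing D
  have hfc := hf.uniformContinuous.continuous
  obtain ⟨ψ, hψ, hψφ⟩ := h (hB.image hfc) (hC.image hfc) (image_mono hBC) φ
    (by rw [← h_map]; exact hφ)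
  rw [← h_map] at hψ hψφ
  exact ⟨pull A f n ψ, hψ, hψφ⟩

lemma ExtendsCocycles.exists_primitive_rel (h : ExtendsCocycles A X n) (hK : IsCompact K)
    (hF : IsClosed F) {φ : Cochain A X (n + 1)} {β : Cochain A X n}
    (hφF : EqOn φ 0 (tuples F (n + 2))) (hβ : φ =ᶠ[smallTuples K (n + 2)] cobd β) :
    ∃ β' : Cochain A X n, φ =ᶠ[smallTuples K (n + 2)] cobd β' ∧ EqOn β' 0 (tuples F (n + 1)) := by
  have hβF : cobd β =ᶠ[smallTuples (K ∩ F) (n + 2)] 0 := by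
    filter_upwards [smallTuples_mono inter_subset_left hβ, eventually_small _ _ univ_mem]
      with s hs hsF
    rw [← hs, hφF fun i => (hsF.1 i).2]
  obtain ⟨ψ, hψ, hψβ⟩ := h (hK.inter_right hF) hK inter_subset_left β hβF
  obtain ⟨β', hβ'F, hβ'⟩ := exists_eqOn_zero_eventuallyEq (eventuallyEq_iff_sub.1 hψβ.symm)
  refine ⟨β', ?_, hβ'F⟩
  filter_upwards [hβ, hψ, cobd_eventuallyEq (tendsto_succAbove_smallTuples K) hβ']
    with s hs_β hs_ψ hs_β'
  simp [hs_β, hs_β', hs_ψ]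

lemma ExtendsCocycles.exists_primitive_union (h : ExtendsCocycles A X n) (hK₁ : IsCompact K₁)
    (hK₂ : IsClosed K₂) {φ : Cochain A X (n + 1)} {β₁ β₂ : Cochain A X n}
    (hφ : cobd φ =ᶠ[smallTuples (K₁ ∪ K₂) (n + 3)] 0)
    (hβ₁ : φ =ᶠ[smallTuples K₁ (n + 2)] cobd β₁) (hβ₂ : φ =ᶠ[smallTuples K₂ (n + 2)] cobd β₂) :
    ∃ β : Cochain A X n, φ =ᶠ[smallTuples (K₁ ∪ K₂) (n + 2)] cobd β := by
  have hK₂' : φ - cobd β₂ =ᶠ[smallTuples ((K₁ ∪ K₂) ∩ K₂) (n + 2)] 0 := by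
    rw [union_inter_cancel_right]
    exact eventuallyEq_iff_sub.1 hβ₂
  obtain ⟨φ', hφ'K₂, hφ'⟩ := exists_eqOn_zero_eventuallyEq hK₂'
  have hφ'_cobd : cobd φ' =ᶠ[smallTuples (K₁ ∪ K₂) (n + 3)] 0 := by
    filter_upwards [cobd_eventuallyEq (tendsto_succAbove_smallTuples _) hφ', hφ] with s hs_φ' hs_φ
    rw [hs_φ', map_sub, cobd_cobd, sub_zero, hs_φ]
  have hφ'K₁ : φ' =ᶠ[smallTuples K₁ (n + 2)] cobd (β₁ - β₂) := by
    filter_upwards [smallTuples_mono subset_union_left hφ', hβ₁] with s hs_φ' hs_β₁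
    simp [hs_φ', hs_β₁]
  obtain ⟨β', hβ', hβ'K₂⟩ := h.exists_primitive_rel hK₁ hK₂ hφ'K₂ hφ'K₁
  obtain ⟨γ, hγ, -⟩ := exists_primitive_of_cover hK₁ hK₂ subset_union_left subset_rfl hφ'_cobd
    (hφ'K₂.mono (tuples_mono inter_subset_right)) hβ' hβ'K₂
  refine ⟨γ + β₂, ?_⟩
  filter_upwards [hφ', hγ] with s hs_φ' hs_γ
  rw [map_add, Pi.add_apply, ← hs_γ, hs_φ', Pi.sub_apply, sub_add_cancel]

lemma exists_nhds_eqOn_cobd_slice {φ : (Fin (k + 1) → X) → A}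
    (hφ : cobd φ =ᶠ[smallTuples K (k + 2)] 0) {x : X} (hx : x ∈ K) :
    ∃ u ∈ 𝓝 x, EqOn φ (cobd (slice x φ)) (tuples (u ∩ K) (k + 1)) := by
  have h := tuplesAlong_nhds_le_smallTuples x (eventually_of_mem_tuples hφ univ)
  obtain ⟨u, hu, hφu⟩ :=
    eventually_tuplesAlong.1 ((tendsto_cons_tuplesAlong_nhds x).eventually h)
  refine ⟨u, hu, fun s hs => sub_eq_zero.1 ?_⟩
  rw [tuples_inter] at hs
  exact (congrFun (slice_cobd x φ) s).symm.trans (hφu s hs.1 (cons_mem_tuples.2 ⟨hx, hs.2⟩))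

lemma ExtendsCocycles.exists_primitive [T2Space X] (h : ExtendsCocycles A X n) (hK : IsCompact K)
    {φ : Cochain A X (n + 1)} (hφ : cobd φ =ᶠ[smallTuples K (n + 3)] 0) :
    ∃ β : Cochain A X n, φ =ᶠ[smallTuples K (n + 2)] cobd β := by
  suffices H : ∃ β : Cochain A X n, φ =ᶠ[smallTuples (closure K ∩ K) (n + 2)] cobd β by
    rwa [inter_eq_self_of_subset_right subset_closure] at H
  refine hK.induction_on
    (p := fun S => ∃ β : Cochain A X n, φ =ᶠ[smallTuples (closure S ∩ K) (n + 2)] cobd β) ?_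
    (fun S T hST => ?_) (fun S T => ?_) fun x hx => ?_
  · rw [closure_empty, empty_inter, smallTuples_empty]
    exact ⟨0, eventually_bot⟩
  · exact Exists.imp fun β hβ =>
      smallTuples_mono (inter_subset_inter_left K (closure_mono hST)) hβ
  · rintro ⟨β₁, hβ₁⟩ ⟨β₂, hβ₂⟩
    rw [closure_union, union_inter_distrib_right]
    refine h.exists_primitive_union (hK.inter_left isClosed_closure)
      (isClosed_closure.inter hK.isClosed) (smallTuples_mono ?_ hφ) hβ₁ hβ₂
    exact union_subset inter_subset_right inter_subset_right
  · obtain ⟨u, hu, hφu⟩ := exists_nhds_eqOn_cobd_slice hφ hx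
    obtain ⟨t, ht, ht_closed, htu⟩ := exists_mem_nhds_isClosed_subset hu
    refine ⟨t, mem_nhdsWithin_of_mem_nhds ht, slice x φ, ?_⟩
    filter_upwards [eventually_small _ _ univ_mem] with s hs
    rw [ht_closed.closure_eq] at hs
    exact hφu fun i => ⟨htu (hs.1 i).1, (hs.1 i).2⟩

lemma ExtendsCocycles.succ [T2Space X] (h : ExtendsCocycles A X n) :
    ExtendsCocycles A X (n + 1) := fun B _ hB _ _ _ hφ =>
  have ⟨β, hβ⟩ := h.exists_primitive hB hφ
  ⟨cobd β, by rw [cobd_cobd], hβ.symm⟩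

lemma ExtendsCocycles.mono [T2Space X] (h : ExtendsCocycles A X n) {m : ℕ} (hnm : n ≤ m) :
    ExtendsCocycles A X m :=
  Nat.le_induction h (fun _ _ => succ) m hnm

lemma ExtendsCocycles.acyclicWithCompactSupports [T2Space X] [LocallyCompactSpace X]
    (h : ExtendsCocycles A X n) : AcyclicWithCompactSupports A X n := by
  intro φ hφ hdφ
  have hφ_cobd : cobd φ =ᶠ[smallTuples univ (n + 3)] 0 := (mem_locZero_iff_smallTuples
    (cobd_eventuallyEq_zero (tendsto_succAbove_tuplesAlong _) hφ)).1 hdφ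
  obtain ⟨u, hu, hφu⟩ := eventually_tuplesAlong.1 hφ
  obtain ⟨K, hK, huK⟩ := exists_compact_superset (mem_coclosedCompact_iff.1 hu)
  have hF : IsClosed (interior K)ᶜ := isOpen_interior.isClosed_compl
  have hφF : EqOn φ 0 (tuples (interior K)ᶜ (n + 2)) := fun s hs =>
    hφu s (tuples_mono (compl_subset_comm.1 (subset_closure.trans huK)) hs)
  obtain ⟨β, hβ⟩ := h.exists_primitive hK (smallTuples_mono (subset_univ K) hφ_cobd)
  obtain ⟨β', hβ', hβ'F⟩ := h.exists_primitive_rel hK hF hφF hβ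
  obtain ⟨γ, hγ, hγK⟩ := exists_primitive_of_cover hK hF (subset_univ K)
    (fun x _ => (em (x ∈ interior K)).imp_left fun hx => interior_subset hx) hφ_cobd
    (hφF.mono (tuples_mono inter_subset_right)) hβ' hβ'F
  rw [← compl_eq_univ_sdiff] at hγK
  exact ⟨γ, eventuallyEq_zero_coclosedCompact hK hγK,
    mem_locZero_of_smallTuples (eventuallyEq_iff_sub.1 hγ)⟩

end Gluing

section CocycleExtension

variable {A : Type*} [AddCommGroup A] {X : Type*} [UniformSpace X]
  {k n : ℕ} {B K U V : Set X}

lemma exists_extension_of_cocycle [LocallyCompactSpace X] (hB : IsCompact B) (hU : IsOpen U)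
    (hBU : B ⊆ U) {φ : (Fin (k + 1) → X) → A} (hφ : cobd φ =ᶠ[smallTuples B (k + 2)] 0) :
    ∃ (φ' : (Fin (k + 1) → X) → A) (K : Set X), IsCompact K ∧ K ⊆ U \ B ∧
      EqOn φ' φ (tuples B (k + 1)) ∧ cobd φ' =ᶠ[smallTuples Kᶜ (k + 2)] 0 := by
  obtain ⟨W, hW, h_comp⟩ := exists_close_comp hφ
  obtain ⟨r, hrW, hr_id, -, hrB⟩ := exists_retraction hW B
  have hB_int : B ⊆ interior {x | r x ∈ B} := subset_interior_iff_mem_nhdsSet.2 hrB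
  obtain ⟨N, hN, hBN, hNU⟩ :=
    exists_compact_between hB (isOpen_interior.inter hU) (subset_inter hB_int hBU)
  obtain ⟨M, hM, hBM, hMN⟩ := exists_compact_between hB isOpen_interior hBN
  have hrN : MapsTo r N B := (hNU.trans inter_subset_left).trans interior_subset
  let φ' := (tuples N (k + 1)).indicator fun s => φ (r ∘ s)
  have hφ'N : EqOn φ' (fun s => φ (r ∘ s)) (tuples N (k + 1)) := eqOn_indicator
  have hφ'Nc : EqOn φ' 0 (tuples Nᶜ (k + 1)) := fun s hs =>
    indicator_of_notMem (fun hsN : s ∈ tuples N _ => hs 0 (hsN 0)) _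
  refine ⟨φ', N \ interior M, hN.diff isOpen_interior,
    fun x hx => ⟨(hNU hx.1).2, fun hxB => hx.2 (hBM hxB)⟩, fun s hs => ?_, ?_⟩
  · rw [hφ'N (tuples_mono (hBN.trans interior_subset) hs)]
    exact congrArg φ (funext fun i => hr_id (hs i))
  · filter_upwards [eventually_of_mem_tuples (h_comp r hrW N hrN) _,
      eventually_mem_tuples_of_mem_nhdsSet hM (subset_interior_iff_mem_nhdsSet.1 hMN) _ _,
      eventually_small _ _ univ_mem] with s hsN hsM hs
    by_cases hs_near : ∃ i, s i ∈ M
    · obtain ⟨i, hi⟩ := hs_near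
      exact (eqOn_cobd hφ'N (hsM i hi)).trans (hsN (hsM i hi))
    · have hsNc : s ∈ tuples Nᶜ (k + 2) := fun i hi =>
        hs.1 i ⟨hi, fun hiM => hs_near ⟨i, interior_subset hiM⟩⟩
      rw [eqOn_cobd hφ'Nc hsNc, map_zero]

lemma AcyclicWithCompactSupports.exists_primitive [T2Space X]
    (h : AcyclicWithCompactSupports A V n)
    (hV : IsOpen V) (hK : IsCompact K) (hKV : K ⊆ V) {ω : Cochain A X (n + 1)}
    (hωK : EqOn ω 0 (tuples Kᶜ (n + 2))) (hω : cobd ω =ᶠ[smallTuples univ (n + 3)] 0) :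
    ∃ (β : Cochain A X n) (K' : Set X), IsCompact K' ∧ K' ⊆ V ∧
      EqOn β 0 (tuples K'ᶜ (n + 1)) ∧ ω =ᶠ[smallTuples univ (n + 2)] cobd β := by
  have hKV_compact : IsCompact ((↑) ⁻¹' K : Set V) :=
    IsInducing.subtypeVal.isCompact_preimage' hK (by rwa [Subtype.range_coe])
  obtain ⟨β₀, hβ₀, hωβ₀⟩ := h (pull A ((↑) : V → X) (n + 1) ω)
    (eventuallyEq_zero_coclosedCompact hKV_compact fun s hs => @hωK (Subtype.val ∘ s) hs)
    (pull_locZero A continuous_subtype_val _ (mem_locZero_of_smallTuples hω))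
  obtain ⟨u, hu, hβ₀u⟩ := eventually_tuplesAlong.1 hβ₀
  set K' : Set X := (↑) '' closure uᶜ
  have hK' : IsCompact K' := (mem_coclosedCompact_iff.1 hu).image continuous_subtype_val
  have hK'V : K' ⊆ V := Subtype.coe_image_subset V _
  obtain ⟨β, rfl, hβK'⟩ := exists_pull_eq_of_eqOn_zero (S := closure uᶜ)
    (Subtype.val_injective (p := (· ∈ V))) (φ := β₀)
    fun s hs => hβ₀u s (tuples_mono (compl_subset_comm.1 subset_closure) hs)
  have h_zero : EqOn (ω - cobd β) 0 (tuples (K ∪ K')ᶜ (n + 2)) := by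
    intro s hs
    rw [compl_union, tuples_inter] at hs
    rw [Pi.sub_apply, hωK hs.1, eqOn_cobd hβK' hs.2, map_zero]
    exact sub_zero 0
  have hKK' : IsCompact (K ∪ K') := hK.union hK'
  refine ⟨β, K', hK', hK'V, hβK', eventuallyEq_iff_sub.2 ?_⟩
  rw [← mem_locZero_iff_smallTuples (eventuallyEq_zero_coclosedCompact hKK' h_zero)]
  exact mem_locZero_of_pull_mem_locZero hKK'.isClosed hV (union_subset hKV hK'V) h_zero hωβ₀

lemma extendsCocycles_of_acyclicWithCompactSupports [T2Space X] [LocallyCompactSpace X]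
    (h : ∀ U : Set X, IsOpen U → IsCompact (closure U) → AcyclicWithCompactSupports A U n) :
    ExtendsCocycles A X n := by
  intro B C hB _ _ φ hφ
  obtain ⟨U, hU, hBU, hU_compact⟩ := exists_isOpen_superset_and_isCompact_closure hB
  obtain ⟨φ', K, hK, hKU, hφ'φ, hφ'K⟩ := exists_extension_of_cocycle hB hU hBU hφ
  obtain ⟨ω, hωK, hω⟩ := exists_eqOn_zero_eventuallyEq (K := univ) (S := Kᶜ) (φ := cobd φ')
    (by rwa [univ_inter])
  have hω_cobd : cobd ω =ᶠ[smallTuples univ (n + 3)] 0 := by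
    simpa only [cobd_cobd] using cobd_eventuallyEq (tendsto_succAbove_smallTuples univ) hω
  obtain ⟨β, K', -, hK'U, hβK', hωβ⟩ := (h (U \ B) (hU.sdiff hB.isClosed)
    (hU_compact.closure_of_subset (sdiff_subset.trans subset_closure))).exists_primitive
    (hU.sdiff hB.isClosed) hK hKU hωK hω_cobd
  refine ⟨φ' - β, smallTuples_mono (subset_univ C) ?_, ?_⟩
  · rw [map_sub]
    exact eventuallyEq_iff_sub.1 (hω.symm.trans hωβ)
  · filter_upwards [eventually_small B (n + 1) univ_mem] with s hs
    have hβs : β s = 0 := hβK' fun i hi => (hK'U hi).2 (hs.1 i)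
    rw [Pi.sub_apply, hβs, sub_zero, hφ'φ hs.1]

end CocycleExtension

section CohDim

variable {A : Type*} [AddCommGroup A] {X : Type*} [UniformSpace X] [T2Space X] {n : ℕ}

lemma ExtendsCocycles.cohDim_le (h : ExtendsCocycles A X n) : cohDim A X ≤ n := by
  refine cohDim_le_iff_subsingleton.2 fun m hm B hB => ?_
  obtain ⟨m, rfl⟩ := Nat.exists_eq_succ_of_ne_zero (Nat.ne_zero_of_lt hm)
  have hBm : ExtendsCocycles A B m :=
    (h.mono (Nat.lt_succ_iff.1 hm)).of_isUniformEmbedding isUniformEmbedding_subtype_val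
  exact subsingleton_Hc_succ_iff.2 hBm.acyclicWithCompactSupports

lemma extendsCocycles_of_subsingleton_Hc [LocallyCompactSpace X]
    (h : ∀ U : Set X, IsOpen U → IsCompact (closure U) → Subsingleton (Hc A (n + 1) U)) :
    ExtendsCocycles A X n :=
  extendsCocycles_of_acyclicWithCompactSupports fun U hU hU_compact =>
    subsingleton_Hc_succ_iff.1 (h U hU hU_compact)

end CohDim

lemma completelyRegularSpace_of_locallyCompact (X : Type*) [TopologicalSpace X] [T2Space X]
    [LocallyCompactSpace X] : CompletelyRegularSpace X :=
  OnePoint.isOpenEmbedding_coe.isInducing.completelyRegularSpace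

end AS

theorem cohDim_le_iff_general (X : Type*) [TopologicalSpace X] [T2Space X] [LocallyCompactSpace X]
    (A : Type*) [AddCommGroup A] (n : ℕ) :
    (cohDim A X ≤ n ↔
      ∀ U : Set X, IsOpen U → IsCompact (closure U) → Subsingleton (AS.Hc A (n + 1) U)) ∧
    (cohDim A X ≤ n ↔
      ∀ B C : Set X, IsCompact B → IsCompact C → ∀ hBC : B ⊆ C,
        Surjective (AS.ASHmap A (continuous_inclusion hBC) n)) := by
  have := AS.completelyRegularSpace_of_locallyCompact X
  obtain ⟨_, rfl⟩ := CompletelyRegularSpace.exists_uniformSpace (X := X)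
  have subsingleton_of_cohDim_le (h : cohDim A X ≤ n) (U : Set X) (hU : IsOpen U)
      (_ : IsCompact (closure U)) : Subsingleton (AS.Hc A (n + 1) U) :=
    AS.cohDim_le_iff_subsingleton.1 h _ n.lt_succ_self U hU.locallyCompactSpace
  rw [← AS.extendsCocycles_iff]
  exact ⟨⟨subsingleton_of_cohDim_le, fun h => (AS.extendsCocycles_of_subsingleton_Hc h).cohDim_le⟩,
    fun h => AS.extendsCocycles_of_subsingleton_Hc (subsingleton_of_cohDim_le h),
    fun h => h.cohDim_le⟩

/-- **Theorem 5** (Cohen).  For a locally compact metric space `X` and an abelian group `A`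
the following are equivalent: (1) `dim_A X ≤ n`; (2) `H^{n+1}_c(U; A) = 0` for every
precompact open `U ⊆ X`; (3) for every compact pair `B ⊆ C` in `X` the restriction
homomorphism `H^n(C; A) → H^n(B; A)` is surjective. -/
theorem cohDim_le_iff (X : Type) [MetricSpace X] [LocallyCompactSpace X]
    (A : Type*) [AddCommGroup A] (n : ℕ) :
    ((cohDim A X ≤ (n : ℕ∞)) ↔
      (∀ U : Set X, IsOpen U → IsCompact (closure U) → Subsingleton (AS.Hc A (n + 1) U))) ∧
    ((cohDim A X ≤ (n : ℕ∞)) ↔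
      (∀ B C : Set X, IsCompact B → IsCompact C → ∀ (hBC : B ⊆ C),
        Function.Surjective (AS.ASHmap A (continuous_inclusion hBC) n))) :=
  cohDim_le_iff_general X A n
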